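/- For every permutation w of {1,…,n} and every δ ∈ GPDs(w), the number of cross tiles of δ plus the number of bump tiles of δ equals the number of blank tiles of δ. -/

import Mathlib

open scoped Classical

namespace GPDpaper

/-- Raw data of a pipe-filling of the `n × n` grid: `d.1 i j` is the (optional) pipe label on
the vertical edge at row `i`, West of column `j` (so `d.1 i 0` is on the West boundary and
`d.1 i (Fin.last n)` on the East boundary); `d.2 i j` is the label on the horizontal edge
North of row `i` in column `j` (so `d.2 0 j` is on the North boundary and
`d.2 (Fin.last n) j` on the South boundary).  Rows are numbered from the top. -/
abbrev Pipes (n : ℕ) :=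
  (Fin n → Fin (n+1) → Option (Fin n)) × (Fin (n+1) → Fin n → Option (Fin n))

variable {n : ℕ}

/-- Label on the West edge of square `(i,j)`. -/
def We (d : Pipes n) (i j : Fin n) : Option (Fin n) := d.1 i j.castSucc
/-- Label on the East edge of square `(i,j)`. -/
def Ea (d : Pipes n) (i j : Fin n) : Option (Fin n) := d.1 i j.succ
/-- Label on the North edge of square `(i,j)`. -/
def No (d : Pipes n) (i j : Fin n) : Option (Fin n) := d.2 i.castSucc j
/-- Label on the South edge of square `(i,j)`. -/
def So (d : Pipes n) (i j : Fin n) : Option (Fin n) := d.2 i.succ j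

/-- The local condition making `d` a generic pipe dream: at each square, the pair of labels
leaving through the East and North edges is either `(W,S)` (cross/horizontal/vertical/blank
tile) or `(S,W)` (bump/elbow/blank tile); moreover two edges of the same square never carry
the same pipe label. -/
def IsValid (d : Pipes n) : Prop :=
  ∀ i j : Fin n,
    ((Ea d i j, No d i j) = (We d i j, So d i j) ∨
     (Ea d i j, No d i j) = (So d i j, We d i j)) ∧
    (We d i j = So d i j → We d i j = none)

/-- The seven generic pipe dream tiles. -/
inductive Tile where
  | cross | bump | nw | se | horiz | vert | blank
deriving DecidableEq

/-- The tile of a pipe-filling at square `(i,j)`. -/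
def tile (d : Pipes n) (i j : Fin n) : Tile :=
  match We d i j, So d i j with
  | some a, some _ => if Ea d i j = some a then .cross else .bump
  | some _, none => if No d i j = none then .horiz else .nw
  | none, some _ => if No d i j = none then .se else .vert
  | none, none => .blank

/-- `d` is a generic pipe dream for the permutation `w`: it is locally valid, the pipe
entering the West boundary in row `i` is labelled `i`, no pipes meet the East and South
boundaries, and the pipe exiting the North boundary in column `j` is labelled `w⁻¹(j)`. -/
def IsGPDof (w : Equiv.Perm (Fin n)) (d : Pipes n) : Prop :=
  IsValid d ∧
  (∀ i : Fin n, d.1 i 0 = some i) ∧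
  (∀ i : Fin n, d.1 i (Fin.last n) = none) ∧
  (∀ j : Fin n, d.2 (Fin.last n) j = none) ∧
  (∀ j : Fin n, d.2 0 j = some (w.symm j))

/-- Number of tiles of `d` of a given type. -/
noncomputable def tileCount (d : Pipes n) (t : Tile) : ℕ :=
  (Finset.univ.filter (fun p : Fin n × Fin n => tile d p.1 p.2 = t)).card

/-- The pipes labelled `p` and `q` cross at the tile `(i,j)`. -/
def CrossesAt (d : Pipes n) (p q : Fin n) (i j : Fin n) : Prop :=
  tile d i j = .cross ∧
  ((We d i j = some p ∧ So d i j = some q) ∨ (We d i j = some q ∧ So d i j = some p))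

/-- The number of tiles at which the pipes labelled `p` and `q` cross. -/
noncomputable def crossCount (d : Pipes n) (p q : Fin n) : ℕ :=
  (Finset.univ.filter (fun ij : Fin n × Fin n => CrossesAt d p q ij.1 ij.2)).card

/-- No two pipes of `d` cross each other at more than one tile. -/
def NoDoubleCross (d : Pipes n) : Prop := ∀ p q : Fin n, crossCount d p q ≤ 1

/-- Number of inversions (Coxeter length) of a permutation. -/
def invCount (w : Equiv.Perm (Fin n)) : ℕ :=
  (Finset.univ.filter (fun p : Fin n × Fin n => p.1 < p.2 ∧ w p.2 < w p.1)).card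

/-- Classic pipe dream (in 1-indexed terms: crosses and bumps for `i+j ≤ n`, NW-elbows on the
antidiagonal `i+j = n+1`, blanks below, and no two pipes crossing twice). -/
def IsClassic (d : Pipes n) : Prop :=
  (∀ i j : Fin n, (i : ℕ) + (j : ℕ) + 2 ≤ n → tile d i j = .cross ∨ tile d i j = .bump) ∧
  (∀ i j : Fin n, (i : ℕ) + (j : ℕ) + 2 = n + 1 → tile d i j = .nw) ∧
  (∀ i j : Fin n, (i : ℕ) + (j : ℕ) + 2 > n + 1 → tile d i j = .blank) ∧
  NoDoubleCross d

/-- Bumpless-reduced: no bump tiles and no two pipes crossing twice. -/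
def IsBumplessReduced (d : Pipes n) : Prop :=
  (∀ i j : Fin n, tile d i j ≠ .bump) ∧ NoDoubleCross d


/-!
Cut the grid along the `j`-th vertical grid line: all `n` pipes enter on the West boundary, and the
`j` pipes leaving through the first `j` columns are the only ones not to cross the line, so `n - j`
pipes do. Symmetrically, `n - i` pipes cross the `i`-th horizontal grid line. Pairing the line West
of column `j` with the line South of row `n - 1 - j` (0-indexed) gives `(n - j) + j = n` crossings,
so the tiles receive `n * n` pipes in total through their West and South edges, that is, one per
tile on average. Crosses and bumps receive two pipes, blanks none and all other tiles one, so the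
crosses and bumps together balance the blanks.
-/

section Flow

variable {A : Type*} {m : ℕ} {h : Fin m → Fin (n + 1) → A} {v : Fin (m + 1) → Fin n → A}

/-- Conservation law for a flow running North and East through the `m × n` grid: at each square
the inflow (West and South) equals the outflow (East and North). As in `Pipes`, `h i j` is the
flow through the vertical edge West of column `j` in row `i`, and `v i j` is the flow through the
horizontal edge North of row `i` in column `j`. -/
def IsConservative [Add A] (h : Fin m → Fin (n + 1) → A) (v : Fin (m + 1) → Fin n → A) : Prop :=
  ∀ i j, h i j.castSucc + v i.succ j = h i j.succ + v i.castSucc j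

namespace IsConservative

theorem transpose [AddCommMagma A] (hc : IsConservative h v) :
    IsConservative (fun j i => v i j) (fun j i => h i j) := fun j i => by
  rw [add_comm, ← hc i j, add_comm]

theorem sum_west_add_south [AddCommMonoid A] [IsCancelAdd A] (hc : IsConservative h v)
    (j : Fin n) :
    ∑ i, h i j.castSucc + v (Fin.last m) j = ∑ i, h i j.succ + v 0 j := by
  have balance : ∑ i, h i j.castSucc + ∑ i : Fin m, v i.succ j
      = ∑ i, h i j.succ + ∑ i : Fin m, v i.castSucc j := by
    simp only [← Finset.sum_add_distrib, hc _ j]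
  have telescope : v 0 j + ∑ i : Fin m, v i.succ j
      = ∑ i : Fin m, v i.castSucc j + v (Fin.last m) j := by
    rw [← Fin.sum_univ_succ fun i => v i j, Fin.sum_univ_castSucc]
  apply add_right_cancel (b := ∑ i : Fin m, v i.succ j)
  calc
    _ = (∑ i, h i j.castSucc + ∑ i : Fin m, v i.succ j) + v (Fin.last m) j :=
      add_right_comm _ _ _
    _ = ∑ i, h i j.succ + (v 0 j + ∑ i : Fin m, v i.succ j) := by
      rw [balance, telescope, add_assoc]
    _ = _ := (add_assoc _ _ _).symm

section Unit

variable [AddCommMonoidWithOne A] [IsCancelAdd A]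

theorem sum_vertical_line_add (hc : IsConservative h v) (west : ∀ i, h i 0 = 1)
    (south : ∀ j, v (Fin.last m) j = 0) (north : ∀ j, v 0 j = 1) (j : Fin (n + 1)) :
    ∑ i, h i j + (j : ℕ) = m := by
  induction j using Fin.induction with
  | zero => simp [west]
  | succ j ih =>
    have column := hc.sum_west_add_south j
    rw [south, north, add_zero] at column
    rw [← ih, column, Fin.val_succ, Fin.val_castSucc, Nat.cast_succ, add_assoc,
      add_comm (1 : A)]

theorem sum_horizontal_line_add (hc : IsConservative h v) (west : ∀ i, h i 0 = 1)
    (east : ∀ i, h i (Fin.last n) = 0) (north : ∀ j, v 0 j = 1) (i : Fin (m + 1)) :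
    ∑ j, v i j + (i : ℕ) = n :=
  hc.transpose.sum_vertical_line_add north east west i

theorem sum_inflow {h : Fin n → Fin (n + 1) → A} {v : Fin (n + 1) → Fin n → A}
    (hc : IsConservative h v) (west : ∀ i, h i 0 = 1) (east : ∀ i, h i (Fin.last n) = 0)
    (south : ∀ j, v (Fin.last n) j = 0) (north : ∀ j, v 0 j = 1) :
    ∑ i, ∑ j, (h i j.castSucc + v i.succ j) = n • (n : A) := by
  have paired_lines (k : Fin n) : ∑ i, h i k.castSucc + ∑ j, v k.rev.succ j = n := by
    have vertical := hc.sum_vertical_line_add west south north k.castSucc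
    have horizontal := hc.sum_horizontal_line_add west east north k.rev.succ
    have indices : (k.castSucc : ℕ) + (k.rev.succ : ℕ) = n := by
      simp only [Fin.val_castSucc, Fin.val_succ, Fin.val_rev]
      omega
    apply add_right_cancel (b := (n : A))
    calc
      _ = (∑ i, h i k.castSucc + ∑ j, v k.rev.succ j)
          + ((k.castSucc : ℕ) + (k.rev.succ : ℕ)) := by rw [← Nat.cast_add, indices]
      _ = n + n := by rw [add_add_add_comm, vertical, horizontal]
  calc
    _ = ∑ k : Fin n, ∑ i, h i k.castSucc + ∑ k : Fin n, ∑ j, v k.succ j := by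
      simp only [Finset.sum_add_distrib]
      rw [Finset.sum_comm]
    _ = ∑ k : Fin n, (∑ i, h i k.castSucc + ∑ j, v k.rev.succ j) := by
      rw [Finset.sum_add_distrib, ← Equiv.sum_comp Fin.revPerm fun k : Fin n => ∑ j, v k.succ j]
      simp only [Fin.revPerm_apply]
    _ = n • (n : A) := by
      simp only [paired_lines, Finset.sum_const, Finset.card_univ, Fintype.card_fin]

end Unit

end IsConservative

end Flow

/-- The number of pipes (0 or 1) running through an edge with label `e`. -/
def pipeCount {α : Type*} (e : Option α) : ℕ := e.isSome.toNat

theorem IsValid.isConservative_pipeCount {d : Pipes n} (hd : IsValid d) :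
    IsConservative (fun i j => pipeCount (d.1 i j)) (fun i j => pipeCount (d.2 i j)) := by
  intro i j
  change pipeCount (We d i j) + pipeCount (So d i j) = pipeCount (Ea d i j) + pipeCount (No d i j)
  rcases (hd i j).1 with straight | turn
  · obtain ⟨hE, hN⟩ := Prod.mk.inj straight
    rw [hE, hN]
  · obtain ⟨hE, hN⟩ := Prod.mk.inj turn
    rw [hE, hN, add_comm]

theorem tile_indicator_balance (d : Pipes n) (i j : Fin n) :
    (if tile d i j = .cross then 1 else 0) + (if tile d i j = .bump then 1 else 0) + 1
      = pipeCount (We d i j) + pipeCount (So d i j) + if tile d i j = .blank then 1 else 0 := by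
  unfold tile
  cases We d i j <;> cases So d i j <;> dsimp only <;> split_ifs <;> simp_all [pipeCount]

theorem tileCount_eq_sum (d : Pipes n) (t : Tile) :
    tileCount d t = ∑ i, ∑ j, if tile d i j = t then 1 else 0 := by
  rw [← Fintype.sum_prod_type' fun i j => if tile d i j = t then 1 else 0, tileCount,
    Finset.card_filter]

theorem tileCount_cross_add_bump_add_sq (d : Pipes n) :
    tileCount d .cross + tileCount d .bump + n * n
      = ∑ i, ∑ j, (pipeCount (We d i j) + pipeCount (So d i j)) + tileCount d .blank := by
  have card_squares : n * n = ∑ _i : Fin n, ∑ _j : Fin n, 1 := by simp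
  simp only [tileCount_eq_sum, card_squares, ← Finset.sum_add_distrib, tile_indicator_balance]

theorem statement6_general (d : Pipes n)
    (hc : IsConservative (fun i j => pipeCount (d.1 i j)) (fun i j => pipeCount (d.2 i j)))
    (west : ∀ i, (d.1 i 0).isSome) (east : ∀ i, d.1 i (Fin.last n) = none)
    (south : ∀ j, d.2 (Fin.last n) j = none) (north : ∀ j, (d.2 0 j).isSome) :
    tileCount d .cross + tileCount d .bump = tileCount d .blank := by
  have total : ∑ i, ∑ j, (pipeCount (We d i j) + pipeCount (So d i j)) = n * n :=
    hc.sum_inflow (by simp [pipeCount, west]) (by simp [pipeCount, east])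
      (by simp [pipeCount, south]) (by simp [pipeCount, north])
  have balance := tileCount_cross_add_bump_add_sq d
  omega

theorem statement6 {n : ℕ} (hn : 1 ≤ n) (w : Equiv.Perm (Fin n)) (d : Pipes n)
    (hd : IsGPDof w d) :
    tileCount d .cross + tileCount d .bump = tileCount d .blank := by
  obtain ⟨valid, west, east, south, north⟩ := hd
  exact statement6_general d valid.isConservative_pipeCount (by simp [west]) east south
    (by simp [north])

end GPDpaper
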